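/- arXiv:math/0409186 — 3 statements merged into one kernel-verified Lean document; each statement's English description precedes it below -/
import Mathlib

section
/- Let N be a prime number and let T, Ω be subsets of ℤ_N with |T| = |Ω|. Then the restricted Fourier transform F_{T→Ω} : ℓ²(T) → ℓ²(Ω), defined by F_{T→Ω} f := f̂|_Ω for f supported on T, is a bijection. Consequently, F_{T→Ω} is injective whenever |T| ≤ |Ω| and surjective whenever |T| ≥ |Ω|, and the same claims hold with the Fourier transform replaced by the inverse Fourier transform. -/
open Polynomial in
lemma cheb_moment {ι k : Type*} [Field k] (T : Finset ι) (n : ι → ℕ) (j : ℕ) :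
    ∀ (a : ι → k) (m : ℕ), j < m →
      ((X : k[X]) - 1) ^ m ∣ ∑ t ∈ T, C (a t) * X ^ (n t) →
      ∑ t ∈ T, a t * (n t : k) ^ j = 0 := by
  induction j with
  | zero =>
    intro a m hm h
    have h1 : ((X : k[X]) - 1) ∣ ∑ t ∈ T, C (a t) * X ^ (n t) :=
      (dvd_pow_self _ (by omega)).trans h
    obtain ⟨q, hq⟩ := h1
    have := congrArg (eval 1) hq
    simpa [eval_finsetSum] using this
  | succ j ih =>
    intro a m hm h
    obtain ⟨m, rfl⟩ : ∃ m', m = m' + 1 := ⟨m - 1, by omega⟩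
    have key := ih (fun t => a t * (n t : k)) m (by omega) ?_
    · rw [← key]
      refine Finset.sum_congr rfl fun t _ => ?_
      ring
    · have e : ∑ t ∈ T, C (a t * (n t : k)) * X ^ (n t)
          = X * derivative (∑ t ∈ T, C (a t) * X ^ (n t)) := by
        rw [derivative_sum, Finset.mul_sum]
        refine Finset.sum_congr rfl fun t _ => ?_
        rw [derivative_C_mul_X_pow]
        rcases Nat.eq_zero_or_pos (n t) with h0 | h0
        · simp [h0]
        · obtain ⟨r, hr⟩ : ∃ r, n t = r + 1 := ⟨n t - 1, by omega⟩
          rw [hr]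
          simp only [Nat.add_sub_cancel]
          ring
      rw [e]
      refine Dvd.dvd.mul_left ?_ _
      obtain ⟨q, hq⟩ := h
      rw [hq, derivative_mul, derivative_pow]
      refine dvd_add ?_ ?_
      · simp only [Nat.add_sub_cancel]
        exact ((Dvd.intro_left _ rfl).mul_right _).mul_right _
      · exact (pow_dvd_pow _ (by omega)).mul_right _

open Polynomial in
lemma cheb_vanish {ι k : Type*} [DecidableEq ι] [Field k] (T : Finset ι) (n : ι → ℕ)
    (hn : ∀ s ∈ T, ∀ t ∈ T, (n s : k) = n t → s = t) (a : ι → k) (m : ℕ) (hm : T.card ≤ m)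
    (h : ((X : k[X]) - 1) ^ m ∣ ∑ t ∈ T, C (a t) * X ^ (n t)) :
    ∀ t ∈ T, a t = 0 := by
  intro t0 ht0
  have hq : ∀ q : k[X], q.natDegree < m → ∑ t ∈ T, a t * q.eval (n t : k) = 0 := by
    intro q hqm
    simp_rw [eval_eq_sum_range' hqm, Finset.mul_sum]
    rw [Finset.sum_comm]
    refine Finset.sum_eq_zero fun j hj => ?_
    have := cheb_moment T n j a m (Finset.mem_range.1 hj) h
    calc _ = q.coeff j * ∑ t ∈ T, a t * (n t : k) ^ j := by
          rw [Finset.mul_sum]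
          exact Finset.sum_congr rfl fun t _ => by ring
      _ = 0 := by rw [this, mul_zero]
  have := hq (∏ s ∈ T.erase t0, (X - C (n s : k))) (by
    rw [natDegree_prod_of_monic _ _ (fun s _ => monic_X_sub_C _)]
    simp only [natDegree_X_sub_C, Finset.sum_const, smul_eq_mul, mul_one]
    rw [Finset.card_erase_of_mem ht0]
    have : 0 < T.card := Finset.card_pos.2 ⟨t0, ht0⟩
    omega)
  rw [Finset.sum_eq_single_of_mem t0 ht0] at this
  · rcases mul_eq_zero.1 this with h | h
    · exact h
    · exfalso
      rw [eval_prod, Finset.prod_eq_zero_iff] at h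
      obtain ⟨s, hs, h⟩ := h
      have hs' := Finset.mem_erase.1 hs
      simp only [eval_sub, eval_X, eval_C, sub_eq_zero] at h
      exact hs'.1 (hn _ hs'.2 _ ht0 h.symm)
  · intro t ht htne
    rw [eval_prod, Finset.prod_eq_zero (Finset.mem_erase.2 ⟨htne, ht⟩) (by simp), mul_zero]

lemma cheb_val (N : ℕ) (hN : N.Prime) : ∃ B : ValuationSubring ℂ, (N : ℂ) ∈ B.nonunits := by
  let A : Subring ℂ := (Int.castRingHom ℂ).range
  have hI : Ideal.span {(N : A)} ≠ ⊤ := by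
    rw [Ne, Ideal.eq_top_iff_one, Ideal.mem_span_singleton]
    rintro ⟨⟨_, c, rfl⟩, h⟩
    have h2 := congrArg (Subtype.val) h
    simp at h2
    have h3 : (1 : ℤ) = N * c := by exact_mod_cast h2
    have : (N : ℤ) ∣ 1 := ⟨c, h3⟩
    have : N ∣ 1 := by exact_mod_cast this
    exact hN.one_lt.ne' (Nat.dvd_one.1 this)
  obtain ⟨B, -, hB⟩ := Ideal.image_subset_nonunits_valuationSubring _ hI
  refine ⟨B, hB ⟨(N : A), Ideal.subset_span rfl, ?_⟩⟩
  simp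

open Polynomial in
lemma cheb_inj (N : ℕ) (hN : N.Prime) (w : ℂ) (hw : IsPrimitiveRoot w N)
    (T Ω : Finset (ZMod N)) (hc : T.card ≤ Ω.card) (a : ZMod N → ℂ)
    (h : ∀ k ∈ Ω, ∑ t ∈ T, a t * w ^ (k.val * t.val) = 0) : ∀ t ∈ T, a t = 0 := by
  have := Fact.mk hN
  by_contra! hne
  obtain ⟨t1, ht1, hat1⟩ := hne
  obtain ⟨B, hB⟩ := cheb_val N hN
  -- normalise by the entry of largest valuation
  obtain ⟨t0, ht0, hmax⟩ := Finset.exists_max_image T (fun t => B.valuation (a t)) ⟨t1, ht1⟩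
  have ha0 : a t0 ≠ 0 := by
    intro h0
    have := hmax t1 ht1
    simp only [h0, map_zero, le_zero_iff, map_eq_zero] at this
    exact hat1 this
  have hmem : ∀ t ∈ T, a t / a t0 ∈ B := by
    intro t ht
    rw [← B.valuation_le_one_iff, map_div₀]
    exact div_le_one_of_le₀ (hmax t ht) zero_le
  have hwB : w ∈ B := by
    rw [← B.valuation_le_one_iff]
    have h1 : B.valuation w ^ N = 1 := by rw [← map_pow, hw.pow_eq_one, map_one]
    exact ((pow_eq_one_iff_of_nonneg zero_le hN.ne_zero).1 h1).le
  classical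
  let b : ZMod N → B := fun t => if ht : t ∈ T then ⟨a t / a t0, hmem t ht⟩ else 0
  have hb : ∀ t ∈ T, (b t : ℂ) = a t / a t0 := fun t ht => by simp [b, ht]
  let z : B := ⟨w, hwB⟩
  let g : B[X] := ∑ t ∈ T, C (b t) * X ^ t.val
  have hroot : ∀ k ∈ Ω, g.IsRoot (z ^ k.val) := by
    intro k hk
    apply Subtype.val_injective
    have : (∑ t ∈ T, a t / a t0 * w ^ (k.val * t.val)) = 0 := by
      have := congrArg (· / a t0) (h k hk)
      simp only [Finset.sum_div, zero_div] at this
      rw [← this]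
      exact Finset.sum_congr rfl fun t _ => by ring
    simp only [g, eval_finsetSum, eval_mul, eval_C, eval_pow, eval_X]
    push_cast
    rw [← this]
    refine Finset.sum_congr rfl fun t ht => ?_
    rw [hb t ht, pow_mul]
  have hzinj : ∀ k l : ZMod N, z ^ k.val = z ^ l.val → k = l := by
    intro k l e
    have e' := congrArg Subtype.val e
    push_cast at e'
    exact ZMod.val_injective N (hw.pow_inj (ZMod.val_lt k) (ZMod.val_lt l) e')
  have hb0 : b t0 = 1 := by
    apply Subtype.val_injective
    rw [hb t0 ht0, div_self ha0]; rfl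
  let π := IsLocalRing.residue B
  have hN0 : (N : IsLocalRing.ResidueField B) = 0 := by
    rw [← map_natCast π, IsLocalRing.residue_eq_zero_iff, ValuationSubring.valuation_lt_one_iff]
    exact hB
  have : CharP (IsLocalRing.ResidueField B) N :=
    ringChar.of_eq (CharP.ringChar_of_prime_eq_zero hN hN0)
  have hz1 : π z = 1 := by
    have hzN : z ^ N = 1 := Subtype.val_injective (by push_cast; exact hw.pow_eq_one)
    have : (π z - 1) ^ N = 0 := by
      rw [sub_pow_char, ← map_pow, hzN]; simp
    exact sub_eq_zero.1 (pow_eq_zero_iff hN.ne_zero |>.1 this)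
  have hdvd : ∏ k ∈ Ω, (X - C (z ^ k.val)) ∣ g := by
    by_cases hg : g = 0
    · rw [hg]; exact dvd_zero _
    have := (Multiset.prod_X_sub_C_dvd_iff_le_roots hg (Ω.val.map fun k => z ^ k.val)).2 ?_
    · rw [Multiset.map_map] at this
      exact this
    · rw [Multiset.le_iff_subset]
      · intro x hx
        obtain ⟨k, hk, rfl⟩ := Multiset.mem_map.1 hx
        exact (mem_roots hg).2 (hroot k hk)
      · exact Multiset.Nodup.map (fun k l e => hzinj k l e) Ω.nodup
  have hdvd2 := map_dvd (mapRingHom π) hdvd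
  have hdvd3 : ((X : (IsLocalRing.ResidueField B)[X]) - 1) ^ Ω.card ∣
      ∑ t ∈ T, C (π (b t)) * X ^ t.val := by
    simpa [g, map_prod, map_sum, hz1] using hdvd2
  have := cheb_vanish T (fun t => t.val) (fun s _ t _ e => ?_) (fun t => π (b t)) Ω.card hc hdvd3 t0 ht0
  · simp [hb0] at this
  · have := (CharP.natCast_eq_natCast (IsLocalRing.ResidueField B) N).1 e
    exact ZMod.val_injective N (Nat.ModEq.eq_of_lt_of_lt this (ZMod.val_lt s) (ZMod.val_lt t))

/-- The restricted transform as a linear map. -/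
noncomputable def chebL (N : ℕ) (w : ℂ) (T Ω : Finset (ZMod N)) : (T → ℂ) →ₗ[ℂ] (Ω → ℂ) where
  toFun f k := ∑ t : T, f t * w ^ ((k : ZMod N).val * (t : ZMod N).val)
  map_add' f g := by ext k; simp [add_mul, Finset.sum_add_distrib]
  map_smul' c f := by ext k; simp [mul_assoc, Finset.mul_sum]

lemma chebL_inj (N : ℕ) (hN : N.Prime) (w : ℂ) (hw : IsPrimitiveRoot w N)
    (T Ω : Finset (ZMod N)) (hc : T.card ≤ Ω.card) : Function.Injective (chebL N w T Ω) := by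
  classical
  rw [injective_iff_map_eq_zero]
  intro f hf
  have := cheb_inj N hN w hw T Ω hc (fun t => if ht : t ∈ T then f ⟨t, ht⟩ else 0) ?_
  · ext ⟨t, ht⟩
    simpa [ht] using this t ht
  · intro k hk
    have := congrFun hf ⟨k, hk⟩
    simp only [chebL, LinearMap.coe_mk, AddHom.coe_mk, Pi.zero_apply] at this
    rw [← this, ← Finset.sum_coe_sort T]
    exact Finset.sum_congr rfl fun t _ => by simp

lemma chebL_surj (N : ℕ) (hN : N.Prime) (w : ℂ) (hw : IsPrimitiveRoot w N)
    (T Ω : Finset (ZMod N)) (hc : Ω.card ≤ T.card) : Function.Surjective (chebL N w T Ω) := by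
  classical
  obtain ⟨S, hST, hS⟩ := Finset.exists_subset_card_eq hc
  have hs : Function.Surjective (chebL N w S Ω) :=
    (LinearMap.injective_iff_surjective_of_finrank_eq_finrank (by simp [hS])).1
      (chebL_inj N hN w hw S Ω hS.le)
  intro y
  obtain ⟨f, rfl⟩ := hs y
  refine ⟨fun t => if ht : (t : ZMod N) ∈ S then f ⟨t, ht⟩ else 0, ?_⟩
  ext k
  simp only [chebL, LinearMap.coe_mk, AddHom.coe_mk]
  let G : ZMod N → ℂ := fun t =>
    (if ht : t ∈ S then f ⟨t, ht⟩ else 0) * w ^ ((k : ZMod N).val * t.val)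
  have h1 : ∑ t ∈ S, G t = ∑ t ∈ T, G t :=
    Finset.sum_subset hST fun t _ ht => by simp [G, ht]
  rw [← Finset.sum_coe_sort T, ← Finset.sum_coe_sort S] at h1
  refine h1.symm.trans (Finset.sum_congr rfl fun t _ => by simp [G])


/-- Let `N` be prime and `T, Ω ⊆ ℤ_N` with `|T| = |Ω|`. Then the restricted
Fourier transform `F_{T→Ω} : ℓ²(T) → ℓ²(Ω)`, `f ↦ f̂|_Ω`, is a bijection; consequently it is
injective when `|T| ≤ |Ω|` and surjective when `|T| ≥ |Ω|`, and the same claims hold for the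
inverse Fourier transform. -/
theorem stmt_0 (N : ℕ) (hN : N.Prime) (T Ω : Finset (ZMod N))
    (F Finv : (T → ℂ) → (Ω → ℂ))
    (hF : ∀ f k, F f k = ∑ t : T, f t *
      Complex.exp (-2 * Real.pi * Complex.I *
        (((k : ZMod N).val : ℂ) * ((t : ZMod N).val : ℂ)) / N))
    (hFinv : ∀ f k, Finv f k = (N : ℂ)⁻¹ * ∑ t : T, f t *
      Complex.exp (2 * Real.pi * Complex.I *
        (((k : ZMod N).val : ℂ) * ((t : ZMod N).val : ℂ)) / N)) :
    (T.card = Ω.card → Function.Bijective F ∧ Function.Bijective Finv) ∧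
    (T.card ≤ Ω.card → Function.Injective F ∧ Function.Injective Finv) ∧
    (Ω.card ≤ T.card → Function.Surjective F ∧ Function.Surjective Finv) := by
  have hw := Complex.isPrimitiveRoot_exp N hN.ne_zero
  set w := Complex.exp (2 * Real.pi * Complex.I / N) with hwdef
  have hN0 : (N : ℂ) ≠ 0 := by exact_mod_cast hN.ne_zero
  have e1 : F = chebL N w⁻¹ T Ω := by
    funext f k
    rw [hF]
    refine Finset.sum_congr rfl fun t _ => ?_
    rw [hwdef, ← Complex.exp_neg, ← Complex.exp_nat_mul]
    congr 2
    push_cast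
    ring
  have e2 : Finv = fun f => (N : ℂ)⁻¹ • chebL N w T Ω f := by
    funext f k
    rw [hFinv]
    simp only [Pi.smul_apply, smul_eq_mul]
    congr 1
    refine Finset.sum_congr rfl fun t _ => ?_
    rw [hwdef, ← Complex.exp_nat_mul]
    congr 2
    push_cast
    ring
  have hinj : T.card ≤ Ω.card → Function.Injective F ∧ Function.Injective Finv := by
    intro hc
    refine ⟨e1 ▸ chebL_inj N hN _ hw.inv T Ω hc, ?_⟩
    rw [e2]
    exact (smul_right_injective _ (inv_ne_zero hN0)).comp (chebL_inj N hN _ hw T Ω hc)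
  have hsurj : Ω.card ≤ T.card → Function.Surjective F ∧ Function.Surjective Finv := by
    intro hc
    refine ⟨e1 ▸ chebL_surj N hN _ hw.inv T Ω hc, ?_⟩
    rw [e2]
    intro y
    obtain ⟨f, hf⟩ := chebL_surj N hN _ hw T Ω hc ((N : ℂ) • y)
    exact ⟨f, by simp only [hf]; rw [inv_smul_smul₀ hN0]⟩
  exact ⟨fun h => ⟨⟨(hinj h.le).1, (hsurj h.ge).1⟩, ⟨(hinj h.le).2, (hsurj h.ge).2⟩⟩, hinj, hsurj⟩
end

section
/- Let N be a prime number, Ω a subset of ℤ_N, and f : ℤ_N → ℂ a signal supported on a set T with |T| ≤ |Ω|/2. Then f can be reconstructed uniquely from Ω and f̂|_Ω: if g : ℤ_N → ℂ satisfies |supp(g)| ≤ |Ω|/2 and ĝ(ω) = f̂(ω) for all ω ∈ Ω, then g = f. -/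
/-- The discrete Fourier transform on `ℤ_N`: `f̂(k) = ∑_{t ∈ ℤ_N} f(t) e^{-2πikt/N}`. -/
noncomputable def dft {N : ℕ} [NeZero N] (f : ZMod N → ℂ) (k : ZMod N) : ℂ :=
  ∑ t : ZMod N, f t *
    Complex.exp (-2 * Real.pi * Complex.I * ((k.val : ℂ) * (t.val : ℂ)) / N)

open Polynomial in
lemma aux_sparse (p : ℕ) [Fact p.Prime] (S : Finset ℕ) :
    (∀ m ∈ S, m < p) → ∀ P : (ZMod p)[X], P.support ⊆ S → (X - 1) ^ S.card ∣ P → P = 0 := by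
  induction S using Finset.induction_on with
  | empty =>
    intro _ P hP _
    simpa using hP
  | insert m S hm ih =>
    intro hS P hP hd
    rw [Finset.card_insert_of_notMem hm] at hd
    have hcoef : ∀ n : ℕ, (X * derivative P - C (m : ZMod p) * P).coeff n
        = ((n : ZMod p) - m) * P.coeff n := by
      intro n
      cases n with
      | zero => simp
      | succ n => simp [coeff_X_mul, coeff_derivative]; ring
    have h0 : X * derivative P - C (m : ZMod p) * P = 0 := by
      apply ih (fun a ha => hS a (Finset.mem_insert_of_mem ha))
      · intro n hn
        rw [mem_support_iff, hcoef] at hn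
        have h1 : n ∈ insert m S := hP (by
          rw [mem_support_iff]; exact right_ne_zero_of_mul hn)
        rcases Finset.mem_insert.1 h1 with rfl | h
        · simp at hn
        · exact h
      · obtain ⟨Q, rfl⟩ := hd
        refine dvd_sub (Dvd.dvd.mul_left ?_ _) (Dvd.dvd.mul_left ?_ _)
        · rw [derivative_mul]
          refine dvd_add (Dvd.dvd.mul_right ?_ _) (Dvd.dvd.mul_right ?_ _)
          · rw [derivative_pow]
            exact Dvd.dvd.mul_right (Dvd.dvd.mul_left (by simp) _) _
          · exact pow_dvd_pow _ (Nat.le_succ _)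
        · exact Dvd.dvd.mul_right (pow_dvd_pow _ (Nat.le_succ _)) _
    have hP' : ∀ n, n ≠ m → P.coeff n = 0 := by
      intro n hn
      by_contra hne
      have h1 : n ∈ insert m S := hP (by rwa [mem_support_iff])
      have h2 := hcoef n
      rw [h0, coeff_zero] at h2
      rcases mul_eq_zero.1 h2.symm with h3 | h3
      · rw [sub_eq_zero, ZMod.natCast_eq_natCast_iff'] at h3
        rw [Nat.mod_eq_of_lt (hS n h1), Nat.mod_eq_of_lt (hS m (Finset.mem_insert_self _ _))] at h3
        exact hn h3
      · exact hne h3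
    have hPm : P = monomial m (P.coeff m) := by
      ext n
      rw [coeff_monomial]
      split_ifs with h
      · rw [h]
      · exact hP' n (Ne.symm h)
    have he : P.eval 1 = 0 := by
      obtain ⟨Q, rfl⟩ := hd
      simp
    rw [hPm] at he
    simp at he
    rw [hPm, he]; simp

open Polynomial in
lemma aux_cheb (p : ℕ) [hp : Fact p.Prime] {R : Type*} [CommRing R] [IsDomain R]
    [IsNoetherianRing R] (ζ : R) (hζ : IsPrimitiveRoot ζ p) (ψ : R →+* ZMod p) (h1 : ψ ζ = 1)
    (π : R) (hπ : ∀ x, ψ x = 0 → π ∣ x) (hπ0 : π ≠ 0) (hπu : ¬ IsUnit π)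
    (S T : Finset ℕ) (hS : ∀ m ∈ S, m < p) (hT : ∀ m ∈ T, m < p) (hST : S.card = T.card)
    (v : S → R) (hv : ∀ t ∈ T, ∑ b : S, ζ ^ (t * b.1) * v b = 0) : v = 0 := by
  by_contra hne
  obtain ⟨b0, hb0⟩ := Function.ne_iff.1 hne
  have hfin : FiniteMultiplicity π (v b0) := FiniteMultiplicity.of_not_isUnit hπu hb0
  obtain ⟨n, hn⟩ := hfin
  have hex : ∃ n, ¬ ∀ b, π ^ n ∣ v b := ⟨n + 1, fun h => hn (h b0)⟩
  classical
  have hk := Nat.find_spec hex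
  have hkmin := fun m => Nat.find_min hex (m := m)
  set k := Nat.find hex
  obtain ⟨j, hj⟩ : ∃ j, k = j + 1 := by
    cases hk' : k with
    | zero => rw [hk'] at hk; simp at hk
    | succ j => exact ⟨j, rfl⟩
  have hjd : ∀ b, π ^ j ∣ v b := by
    have := hkmin j (by omega)
    push Not at this
    exact this
  choose w hw using hjd
  rw [hj] at hk
  push Not at hk
  obtain ⟨b1, hb1⟩ := hk
  have hwb1 : ψ (w b1) ≠ 0 := by
    intro h
    apply hb1
    rw [hw b1, pow_succ]
    exact mul_dvd_mul_left _ (hπ _ h)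
  have hw0 : ∀ t ∈ T, ∑ b : S, ζ ^ (t * b.1) * w b = 0 := by
    intro t ht
    have h := hv t ht
    have h2 : π ^ j * ∑ b : S, ζ ^ (t * b.1) * w b = 0 := by
      rw [← h, Finset.mul_sum]
      refine Finset.sum_congr rfl fun b _ => ?_
      rw [hw b]; ring
    exact (mul_eq_zero.1 h2).resolve_left (pow_ne_zero _ hπ0)
  let P : R[X] := ∑ b : S, monomial b.1 (w b)
  have hcoef : ∀ b : S, P.coeff b.1 = w b := by
    intro b
    simp only [P, finsetSum_coeff, coeff_monomial]
    rw [Finset.sum_eq_single b]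
    · simp
    · intro c _ hc
      rw [if_neg]
      exact fun h => hc (Subtype.ext h)
    · simp
  have hcoef' : ∀ n, n ∉ S → P.coeff n = 0 := by
    intro n hn
    simp only [P, finsetSum_coeff, coeff_monomial]
    refine Finset.sum_eq_zero fun c _ => ?_
    rw [if_neg]
    rintro rfl
    exact hn c.2
  have hP0 : P ≠ 0 := by
    intro h
    have := hcoef b1
    rw [h, coeff_zero] at this
    rw [← this] at hwb1
    simp at hwb1
  have hdvd : ∏ t ∈ T, (X - C (ζ ^ t)) ∣ P := by
    have : (Multiset.map (fun a => X - C a) (T.val.map (fun t => ζ ^ t))).prod ∣ P := by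
      rw [Multiset.prod_X_sub_C_dvd_iff_le_roots hP0, Multiset.le_iff_subset]
      · intro x hx
        obtain ⟨t, ht, rfl⟩ := Multiset.mem_map.1 hx
        rw [mem_roots hP0, IsRoot.def, ← hw0 t ht]
        simp only [P, eval_finsetSum, eval_monomial]
        refine Finset.sum_congr rfl fun b _ => ?_
        rw [pow_mul]; ring
      · refine Multiset.Nodup.map_on ?_ T.nodup
        intro x hx y hy hxy
        exact hζ.pow_inj (hT x hx) (hT y hy) hxy
    rw [Multiset.map_map] at this
    exact this
  have hdvd2 : (X - 1) ^ S.card ∣ P.map ψ := by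
    have := Polynomial.map_dvd ψ hdvd
    rw [Polynomial.map_prod] at this
    simpa [h1, hST] using this
  have hz := aux_sparse p S hS (P.map ψ) (by
    intro n hn
    by_contra h
    rw [mem_support_iff, coeff_map, hcoef' n h] at hn
    simp at hn) hdvd2
  apply hwb1
  rw [← hcoef b1, ← coeff_map, hz, coeff_zero]

open Polynomial in
lemma aux_cheb_complex (p : ℕ) [hp : Fact p.Prime] (ξ : ℂ) (hξ : IsPrimitiveRoot ξ p)
    (S T : Finset ℕ) (hS : ∀ m ∈ S, m < p) (hT : ∀ m ∈ T, m < p) (hST : S.card = T.card)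
    (v : S → ℂ) (hv : ∀ t ∈ T, ∑ b : S, ξ ^ (t * b.1) * v b = 0) : v = 0 := by
  classical
  have hirr : Irreducible (cyclotomic p ℤ) := cyclotomic.irreducible hp.out.pos
  have : IsDomain (AdjoinRoot (cyclotomic p ℤ)) := AdjoinRoot.isDomain_of_prime hirr.prime
  have : IsNoetherianRing (AdjoinRoot (cyclotomic p ℤ)) :=
    inferInstanceAs (IsNoetherianRing (ℤ[X] ⧸ Ideal.span {cyclotomic p ℤ}))
  let φ : AdjoinRoot (cyclotomic p ℤ) →+* ℂ := AdjoinRoot.lift (Int.castRingHom ℂ) ξ (by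
    have := (hξ.isRoot_cyclotomic hp.out.pos)
    rw [IsRoot.def, ← map_cyclotomic_int, eval_map] at this
    exact this)
  let ψ : AdjoinRoot (cyclotomic p ℤ) →+* ZMod p := AdjoinRoot.lift (Int.castRingHom _) 1 (by
    rw [← eval_map, map_cyclotomic_int, eval_one_cyclotomic_prime]; simp)
  set ζ := AdjoinRoot.root (cyclotomic p ℤ) with hζdef
  have hφζ : φ ζ = ξ := AdjoinRoot.lift_root _
  have hψζ : ψ ζ = 1 := AdjoinRoot.lift_root _
  have hφ : Function.Injective φ := by
    rw [injective_iff_map_eq_zero]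
    intro a
    induction a using AdjoinRoot.induction_on with
    | ih q =>
    intro h
    rw [AdjoinRoot.mk_eq_zero, cyclotomic_eq_minpoly hξ hp.out.pos]
    apply minpoly.isIntegrallyClosed_dvd (hξ.isIntegral hp.out.pos)
    have h2 : φ (AdjoinRoot.mk _ q) = eval₂ (Int.castRingHom ℂ) ξ q := AdjoinRoot.lift_mk _ _
    rw [h2] at h
    exact h
  have hζ : IsPrimitiveRoot ζ p := by
    rw [← hφζ] at hξ
    exact hξ.of_map_of_injective hφ
  have hmk1 : AdjoinRoot.mk (cyclotomic p ℤ) (X - 1) = ζ - 1 := by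
    simp [hζdef]
  have hpd : ζ - 1 ∣ (p : AdjoinRoot (cyclotomic p ℤ)) := by
    obtain ⟨q, hq⟩ := X_sub_C_dvd_sub_C_eval (a := (1 : ℤ)) (p := cyclotomic p ℤ)
    rw [eval_one_cyclotomic_prime] at hq
    have := congrArg (AdjoinRoot.mk (cyclotomic p ℤ)) hq
    rw [map_sub, AdjoinRoot.mk_self, map_mul, C_1, hmk1] at this
    simp at this
    exact ⟨-AdjoinRoot.mk _ q, by rw [mul_neg, ← this, neg_neg]⟩
  have hker : ∀ x, ψ x = 0 → ζ - 1 ∣ x := by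
    intro x
    induction x using AdjoinRoot.induction_on with
    | ih q =>
    intro h
    have h2 : ψ (AdjoinRoot.mk _ q) = eval₂ (Int.castRingHom _) 1 q := AdjoinRoot.lift_mk _ _
    rw [h2] at h
    have h3 : ((q.eval 1 : ℤ) : ZMod p) = 0 := by
      rw [← h]
      rw [eval₂_at_one]; rfl
    rw [ZMod.intCast_zmod_eq_zero_iff_dvd] at h3
    obtain ⟨c, hc⟩ := h3
    obtain ⟨r, hr⟩ := X_sub_C_dvd_sub_C_eval (a := (1 : ℤ)) (p := q)
    have h4 : q = (X - 1) * r + C ((p : ℤ) * c) := by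
      rw [← hc, ← C_1, ← hr]; ring
    rw [h4, map_add, map_mul, hmk1]
    refine dvd_add (dvd_mul_right _ _) ?_
    rw [C_mul, map_mul]
    refine Dvd.dvd.mul_right ?_ _
    simpa using hpd
  have hπ0 : ζ - 1 ≠ 0 := by
    rw [sub_ne_zero]
    exact hζ.ne_one hp.out.one_lt
  have hπu : ¬ IsUnit (ζ - 1) := by
    intro h
    have := h.map ψ
    rw [map_sub, hψζ, map_one, sub_self] at this
    exact not_isUnit_zero this
  by_contra hne
  let e : S ≃ T := Finset.equivOfCardEq hST
  let M : Matrix S S (AdjoinRoot (cyclotomic p ℤ)) := fun a b => ζ ^ ((e a).1 * b.1)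
  have hdetC : (M.map φ).det = 0 := by
    rw [← Matrix.exists_mulVec_eq_zero_iff]
    refine ⟨v, hne, ?_⟩
    ext a
    have := hv (e a).1 (e a).2
    have hM : ∀ b, (M.map φ) a b = ξ ^ ((e a).1 * b.1) := by
      intro b
      rw [Matrix.map_apply, ← hφζ, ← map_pow]
    simp only [Matrix.mulVec, dotProduct, hM]
    exact this
  have hdet : M.det = 0 := by
    apply hφ
    rw [map_zero, RingHom.map_det]
    exact hdetC
  obtain ⟨w, hw, hMw⟩ := Matrix.exists_mulVec_eq_zero_iff.2 hdet
  apply hw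
  refine aux_cheb p ζ hζ ψ hψζ (ζ - 1) hker hπ0 hπu S T hS hT hST w ?_
  intro t ht
  have := congrFun hMw (e.symm ⟨t, ht⟩)
  simpa [Matrix.mulVec, dotProduct, M] using this

/-- Let `N` be prime, `Ω ⊆ ℤ_N`, and `f : ℤ_N → ℂ` supported on a set `T` with
`|T| ≤ |Ω|/2`. Then `f` is uniquely reconstructible from `f̂|_Ω`: any `g` with
`|supp(g)| ≤ |Ω|/2` and `ĝ = f̂` on `Ω` equals `f`. -/
theorem stmt_1 (N : ℕ) [NeZero N] (hN : N.Prime) (Ω : Finset (ZMod N))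
    (f : ZMod N → ℂ) (T : Finset (ZMod N))
    (hsupp : ∀ t, f t ≠ 0 → t ∈ T)
    (hcard : (T.card : ℝ) ≤ (Ω.card : ℝ) / 2) :
    ∀ g : ZMod N → ℂ,
      ((Set.ncard {t : ZMod N | g t ≠ 0} : ℝ) ≤ (Ω.card : ℝ) / 2) →
      (∀ ω ∈ Ω, dft g ω = dft f ω) → g = f := by
  intro g hg hgf
  classical
  have : Fact N.Prime := ⟨hN⟩
  let G : Finset (ZMod N) := Finset.univ.filter (fun t => g t ≠ 0)
  have hG : Set.ncard {t : ZMod N | g t ≠ 0} = G.card := by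
    rw [← Set.ncard_coe_finset]; simp [G]
  rw [hG] at hg
  have hle : (T ∪ G).card ≤ Ω.card := by
    have h1 : T.card + G.card ≤ Ω.card := by
      have : (T.card : ℝ) + G.card ≤ Ω.card := by linarith
      exact_mod_cast this
    exact (Finset.card_union_le _ _).trans h1
  obtain ⟨Ω', hΩ', hc⟩ := Finset.exists_subset_card_eq hle
  have hinj : Function.Injective (ZMod.val : ZMod N → ℕ) := ZMod.val_injective N
  let ξ : ℂ := (Complex.exp (2 * Real.pi * Complex.I / N))⁻¹
  have hξ : IsPrimitiveRoot ξ N := (Complex.isPrimitiveRoot_exp N (NeZero.ne N)).inv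
  have hexp : ∀ k t : ℕ, Complex.exp (-2 * Real.pi * Complex.I * ((k : ℂ) * (t : ℂ)) / N)
      = ξ ^ (k * t) := by
    intro k t
    simp only [ξ]
    rw [← Complex.exp_neg, ← Complex.exp_nat_mul]
    congr 1
    push_cast; ring
  have key := aux_cheb_complex N ξ hξ ((T ∪ G).image ZMod.val) (Ω'.image ZMod.val)
    (by intro m hm; obtain ⟨x, _, rfl⟩ := Finset.mem_image.1 hm; exact ZMod.val_lt x)
    (by intro m hm; obtain ⟨x, _, rfl⟩ := Finset.mem_image.1 hm; exact ZMod.val_lt x)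
    (by rw [Finset.card_image_of_injective _ hinj, Finset.card_image_of_injective _ hinj, hc])
    (fun b => g (b.1 : ZMod N) - f (b.1 : ZMod N))
    (by
      intro t ht
      obtain ⟨ω, hω, rfl⟩ := Finset.mem_image.1 ht
      have h := hgf ω (hΩ' hω)
      rw [Finset.sum_coe_sort ((T ∪ G).image ZMod.val)
        (fun b : ℕ => ξ ^ (ω.val * b) * (g (b : ZMod N) - f (b : ZMod N))),
        Finset.sum_image (fun x _ y _ hxy => hinj hxy)]
      rw [← sub_eq_zero, dft, dft, ← Finset.sum_sub_distrib] at h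
      rw [← h]
      rw [Finset.sum_subset (Finset.subset_univ (T ∪ G))]
      · refine Finset.sum_congr rfl fun x _ => ?_
        rw [hexp, ZMod.natCast_zmod_val]; ring
      · intro x _ hx
        rw [ZMod.natCast_zmod_val]
        have h1 : f x = 0 := by
          by_contra h; exact hx (Finset.mem_union_left _ (hsupp x h))
        have h2 : g x = 0 := by
          by_contra h; exact hx (Finset.mem_union_right _ (by simp [G, h]))
        rw [h1, h2]; simp)
  ext x
  by_cases hx : x ∈ T ∪ G
  · have := congrFun key ⟨x.val, Finset.mem_image_of_mem _ hx⟩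
    simp only [ZMod.natCast_zmod_val, Pi.zero_apply] at this
    exact sub_eq_zero.1 this
  · have h1 : f x = 0 := by
      by_contra h; exact hx (Finset.mem_union_left _ (hsupp x h))
    have h2 : g x = 0 := by
      by_contra h; exact hx (Finset.mem_union_right _ (by simp [G, h]))
    rw [h1, h2]
end

section
/- Let N be a prime number and let Ω be a proper subset of ℤ_N (i.e. Ω is not the set of all N frequencies). Then there exist distinct vectors f, g : ℤ_N → ℂ such that |supp(f)| ≤ |Ω|/2 + 1 and |supp(g)| ≤ |Ω|/2 + 1, and such that f̂(ω) = ĝ(ω) for all ω ∈ Ω. -/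
/-- Let `N` be prime and `Ω ⊊ ℤ_N` a proper subset of the frequencies. Then
there exist distinct vectors `f, g : ℤ_N → ℂ` with `|supp(f)|, |supp(g)| ≤ |Ω|/2 + 1` whose
Fourier transforms agree on `Ω`. -/
theorem stmt_2 (N : ℕ) [NeZero N] (hN : N.Prime) (Ω : Finset (ZMod N))
    (hΩ : Ω ≠ Finset.univ) :
    ∃ f g : ZMod N → ℂ, f ≠ g ∧
      (Set.ncard {t : ZMod N | f t ≠ 0} : ℝ) ≤ (Ω.card : ℝ) / 2 + 1 ∧
      (Set.ncard {t : ZMod N | g t ≠ 0} : ℝ) ≤ (Ω.card : ℝ) / 2 + 1 ∧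
      ∀ ω ∈ Ω, dft f ω = dft g ω := by
  classical
  have hlt : Ω.card < (Finset.univ : Finset (ZMod N)).card :=
    Finset.card_lt_card (Finset.ssubset_univ_iff.mpr hΩ)
  obtain ⟨T, -, hT⟩ := Finset.exists_subset_card_eq (Nat.succ_le_of_lt hlt)
  obtain ⟨A, hAT, hA⟩ := Finset.exists_subset_card_eq
    (show (Ω.card + 1) / 2 ≤ T.card by omega)
  have hB : (T \ A).card = Ω.card + 1 - (Ω.card + 1) / 2 := by
    rw [Finset.card_sdiff_of_subset hAT, hT, hA]
  let M : Matrix Ω T ℂ := fun k t =>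
    Complex.exp (-2 * Real.pi * Complex.I * ((k.1.val : ℂ) * (t.1.val : ℂ)) / N)
  have hker : LinearMap.ker M.mulVecLin ≠ ⊥ := by
    apply LinearMap.ker_ne_bot_of_finrank_lt
    simp [hT]
  obtain ⟨v, hv, hv0⟩ := (Submodule.ne_bot_iff _).mp hker
  let h : ZMod N → ℂ := fun t => if ht : t ∈ T then v ⟨t, ht⟩ else 0
  have hT0 : ∀ t, t ∉ T → h t = 0 := fun t ht => by simp [h, ht]
  have hne : h ≠ 0 := by
    intro h0
    apply hv0
    funext t
    have := congrFun h0 t.1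
    simpa [h] using this
  have hdft : ∀ ω ∈ Ω, dft h ω = 0 := by
    intro ω hω
    have h1 : (M.mulVec v) ⟨ω, hω⟩ = 0 := by
      have : M.mulVecLin v = 0 := hv
      exact congrFun this ⟨ω, hω⟩
    unfold dft
    rw [← Finset.sum_subset (Finset.subset_univ T)
      (fun t _ ht => by rw [hT0 t ht, zero_mul]), ← Finset.sum_coe_sort T]
    rw [← h1]
    simp only [Matrix.mulVec, dotProduct]
    refine Finset.sum_congr rfl fun t _ => ?_
    simp [h, M, mul_comm]
  have hcard : ∀ (S : Finset (ZMod N)) (f : ZMod N → ℂ), (∀ t, t ∉ S → f t = 0) →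
      2 * S.card ≤ Ω.card + 2 →
      (Set.ncard {t : ZMod N | f t ≠ 0} : ℝ) ≤ (Ω.card : ℝ) / 2 + 1 := by
    intro S f hf hS
    have h1 : Set.ncard {t : ZMod N | f t ≠ 0} ≤ S.card := by
      rw [← Set.ncard_coe_finset]
      refine Set.ncard_le_ncard (fun t ht => ?_) (Finset.finite_toSet S)
      by_contra hc
      exact ht (hf t hc)
    have h2 : (Set.ncard {t : ZMod N | f t ≠ 0} : ℝ) ≤ S.card := by exact_mod_cast h1
    have h3 : (2 : ℝ) * S.card ≤ Ω.card + 2 := by exact_mod_cast hS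
    linarith
  have hsub : ∀ t, (if t ∈ A then h t else 0) - (if t ∈ A then 0 else -h t) = h t := by
    intro t
    split_ifs <;> simp
  refine ⟨fun t => if t ∈ A then h t else 0, fun t => if t ∈ A then 0 else -h t,
    ?_, ?_, ?_, ?_⟩
  · intro he
    apply hne
    funext t
    rw [← hsub t, sub_eq_zero.mpr (congrFun he t)]
    rfl
  · exact hcard A _ (fun t ht => by simp [ht]) (by omega)
  · refine hcard (T \ A) _ (fun t ht => ?_) (by omega)
    by_cases hA' : t ∈ A
    · simp [hA']
    · have : t ∉ T := fun hc => ht (Finset.mem_sdiff.mpr ⟨hc, hA'⟩)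
      simp [hA', hT0 t this]
  · intro ω hω
    rw [← sub_eq_zero]
    refine Eq.trans ?_ (hdft ω hω)
    unfold dft
    rw [← Finset.sum_sub_distrib]
    refine Finset.sum_congr rfl fun t _ => ?_
    rw [← sub_mul]
    exact congrArg (fun z => z * _) (hsub t)
end
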